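/- Let d ≥ 2, λ ∈ (0,1], M > 0 and A ∈ 𝒜(λ,M). Let χ be the corrector, Â the homogenized matrix, and define B(y) = (b_ij(y)) by b_ij = a_ij + a_ik ∂χ_j/∂y_k − â_ij (so B is ℤ^d-periodic, continuous, with ∫_{[0,1]^d} b_ij dy = 0 and ∫ b_ij ∂_i ψ dy = 0 for every smooth compactly supported ψ on ℝ^d). Then there exist bounded continuous ℤ^d-periodic functions φ_kij : ℝ^d → ℝ, 1 ≤ i, j, k ≤ d, such that φ_kij = −φ_ikj and b_ij = ∂φ_kij/∂y_k in the sense of distributions, i.e. ∫ b_ij ψ dy = −∑_k ∫ φ_kij ∂_k ψ dy for every smooth compactly supported ψ on ℝ^d. -/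

import Mathlib

open MeasureTheory Metric Set
open scoped ENNReal NNReal

noncomputable section

/-- The bilinear form `⟨A ξ, η⟩ = ∑ i j, A i j * ξ j * η i`. -/
def bform {d : ℕ} (A : Matrix (Fin d) (Fin d) ℝ) (ξ η : EuclideanSpace ℝ (Fin d)) : ℝ :=
  ∑ i, ∑ j, A i j * ξ j * η i

/-- The point of `ℝᵈ` (as `EuclideanSpace`) with integer coordinates `z`. -/
def perPt {d : ℕ} (z : Fin d → ℤ) : EuclideanSpace ℝ (Fin d) :=
  (WithLp.equiv 2 (Fin d → ℝ)).symm fun i => (z i : ℝ)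

/-- The class `𝒜(λ, M)`: symmetric, elliptic, `ℤᵈ`-periodic, `M`-Lipschitz coefficients. -/
structure MemA (d : ℕ) (lam M : ℝ)
    (A : EuclideanSpace ℝ (Fin d) → Matrix (Fin d) (Fin d) ℝ) : Prop where
  symm : ∀ y, (A y).IsSymm
  ellip_low : ∀ y ξ, lam * ‖ξ‖ ^ 2 ≤ bform (A y) ξ ξ
  ellip_high : ∀ y ξ, bform (A y) ξ ξ ≤ ‖ξ‖ ^ 2
  periodic : ∀ (y : EuclideanSpace ℝ (Fin d)) (z : Fin d → ℤ), A (y + perPt z) = A y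
  lipschitz : ∀ x y i j, |A x i j - A y i j| ≤ M * ‖x - y‖

/-- `u` is a weak solution of `div (A ∇u) = 0` in the open set `Ω`:
`u` is `C¹` on `Ω` and the weak formulation holds against all test functions. -/
def IsWeakSol {d : ℕ} (A : EuclideanSpace ℝ (Fin d) → Matrix (Fin d) (Fin d) ℝ)
    (Ω : Set (EuclideanSpace ℝ (Fin d))) (u : EuclideanSpace ℝ (Fin d) → ℝ) : Prop :=
  ContDiffOn ℝ 1 u Ω ∧
  ∀ ψ : EuclideanSpace ℝ (Fin d) → ℝ, ContDiff ℝ (⊤ : ℕ∞) ψ → HasCompactSupport ψ →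
    tsupport ψ ⊆ Ω →
    ∫ x in Ω, bform (A x) (gradient u x) (gradient ψ x) = 0

/-- The unit cube `[0,1]^d`. -/
def unitCube (d : ℕ) : Set (EuclideanSpace ℝ (Fin d)) := {y | ∀ i, y i ∈ Set.Icc (0 : ℝ) 1}

/-- `χ` is the corrector for the operator with coefficient matrix `A`. -/
def IsCorrector {d : ℕ} (A : EuclideanSpace ℝ (Fin d) → Matrix (Fin d) (Fin d) ℝ)
    (χ : Fin d → EuclideanSpace ℝ (Fin d) → ℝ) : Prop :=
  ∀ j, ContDiff ℝ 1 (χ j) ∧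
    (∀ (y : EuclideanSpace ℝ (Fin d)) (z : Fin d → ℤ), χ j (y + perPt z) = χ j y) ∧
    (∫ y in unitCube d, χ j y) = 0 ∧
    (∀ ψ : EuclideanSpace ℝ (Fin d) → ℝ, ContDiff ℝ (⊤ : ℕ∞) ψ → HasCompactSupport ψ →
      ∫ y, bform (A y) (gradient (χ j) y + EuclideanSpace.single j 1) (gradient ψ y) = 0)

/-- The homogenized matrix `Â`, `â_ij = ∫_{[0,1]^d} (a_ij + a_ik ∂χ_j/∂y_k) dy`. -/
def homMatrix {d : ℕ} (A : EuclideanSpace ℝ (Fin d) → Matrix (Fin d) (Fin d) ℝ)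
    (χ : Fin d → EuclideanSpace ℝ (Fin d) → ℝ) : Matrix (Fin d) (Fin d) ℝ :=
  Matrix.of fun i j => ∫ y in unitCube d, (A y i j + ∑ k, A y i k * gradient (χ j) y k)

/-- The ellipsoid `E_r = {x : ⟨Â⁻¹ x, x⟩ < r²}` associated with a homogenized matrix `Â`. -/
def ellipsoid {d : ℕ} (Ahat : Matrix (Fin d) (Fin d) ℝ) (r : ℝ) :
    Set (EuclideanSpace ℝ (Fin d)) := {x | bform Ahat⁻¹ x x < r ^ 2}

/-- The class `ℱ(N)` of normalized solutions of constant-coefficient equations in `B₁`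
satisfying an `N`-doubling condition. -/
def MemF (d : ℕ) (lam N : ℝ) (u : EuclideanSpace ℝ (Fin d) → ℝ) : Prop :=
  (∃ A : Matrix (Fin d) (Fin d) ℝ, A.IsSymm ∧
      (∀ ξ : EuclideanSpace ℝ (Fin d), lam * ‖ξ‖ ^ 2 ≤ bform A ξ ξ ∧ bform A ξ ξ ≤ ‖ξ‖ ^ 2) ∧
      IsWeakSol (fun _ => A) (ball 0 1) u) ∧
  (⨍ x in ball (0 : EuclideanSpace ℝ (Fin d)) 1, (u x) ^ 2) = 1 ∧
  (⨍ x in ball (0 : EuclideanSpace ℝ (Fin d)) 1, (u x) ^ 2) ≤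
    N * ⨍ x in ball (0 : EuclideanSpace ℝ (Fin d)) (1 / 2), (u x) ^ 2

/-- `w` is harmonic on `Ω`: it is `C²` there and its Laplacian vanishes. -/
def IsHarmonicOn {d : ℕ} (w : EuclideanSpace ℝ (Fin d) → ℝ)
    (Ω : Set (EuclideanSpace ℝ (Fin d))) : Prop :=
  ContDiffOn ℝ 2 w Ω ∧ ∀ x ∈ Ω, (∑ i, gradient (fun y => gradient w y i) x i) = 0

/-- `F_ε(y, r) = ℋ^{d-1}(Z(u) ∩ B(y,r)) / r^{d-1}` where `Z(u)` is the nodal set of `u` in `B₂`. -/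
def nodalRatio {d : ℕ} (u : EuclideanSpace ℝ (Fin d) → ℝ)
    (y : EuclideanSpace ℝ (Fin d)) (r : ℝ) : ℝ≥0∞ :=
  μH[(d : ℝ) - 1] ({x ∈ ball (0 : EuclideanSpace ℝ (Fin d)) 2 | u x = 0} ∩ ball y r) /
    ENNReal.ofReal (r ^ (d - 1))

/-!
Write `∂ₖ` for the derivative along the `k`-th basis vector `eₖ`. For a periodic function `g`, let
`Tₘ g` be its average over one period along `eₘ` and let `Jₘ g (y) = ∫₀¹ s g(y + s eₘ) ds`.
Integrating by parts in `s` gives `∂ₘ (Jₘ g) = g - Tₘ g`. Hence for a divergence-free `c` the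
antisymmetric potential `φₖᵢ = δₖₘ Jₘ cᵢ - δᵢₘ Jₘ cₖ` satisfies `∑ₖ ∂ₖ φₖᵢ = cᵢ - Tₘ cᵢ`: the second
term contributes nothing because `Jₘ` preserves divergence-free fields. Averaging the columns of `B`
along `e₁, …, e_d` in turn thus changes them only by fields with a potential, and what is left in
the end is constant and has the same mean as at the start, namely zero.
-/

open Function Module
open scoped ContDiff

section Periodic

variable {E F : Type*} [AddCommGroup E] {g : E → F}

lemma periodic_of_mem_span {R : Type*} [Semiring R] [Module R E] {s : Set E}
    (h : ∀ (r : R), ∀ x ∈ s, Periodic g (r • x)) {y : E} (hy : y ∈ Submodule.span R s) :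
    Periodic g y := by
  induction hy using Submodule.closure_induction with
  | zero => exact fun x => by rw [add_zero]
  | add x y _ _ hx hy => exact hx.add_period hy
  | smul_mem r x hx => exact h r x hx

lemma periodic_of_mem_span_int {ι : Type*} {e : ι → E} (h : ∀ i, Periodic g (e i)) {y : E}
    (hy : y ∈ Submodule.span ℤ (range e)) : Periodic g y :=
  periodic_of_mem_span (by rintro n _ ⟨i, rfl⟩; exact (h i).zsmul n) hy

lemma eq_apply_zero_of_periodic_smul_basis {ι R : Type*} [Semiring R] [Module R E]
    (e : Basis ι R E) (h : ∀ i (r : R), Periodic g (r • e i)) (y : E) : g y = g 0 := by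
  have hy : Periodic g y :=
    periodic_of_mem_span (by rintro r _ ⟨i, rfl⟩; exact h i r) (e.mem_span y)
  simpa using hy 0

lemma periodic_comp_add_smul {R : Type*} [Semiring R] [Module R E] {v : E} (h : Periodic g v)
    (y : E) : Periodic (fun r : R => g (y + r • v)) 1 := by
  intro r
  simp only [add_smul, one_smul, ← add_assoc, h _]

end Periodic

section LatticePeriodic

variable {ι E F : Type*} [Finite ι] [NormedAddCommGroup E] [NormedSpace ℝ E] (e : Basis ι ℝ E)
  [NormedAddCommGroup F] {g : E → F}

lemma exists_norm_le_of_continuous_of_periodic (hg : Continuous g)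
    (hper : ∀ i, Periodic g (e i)) : ∃ K, ∀ y, ‖g y‖ ≤ K := by
  cases nonempty_fintype ι
  have := e.finiteDimensional_of_finite
  have := FiniteDimensional.proper_real E
  obtain ⟨K, hK⟩ := (ZSpan.fundamentalDomain_isBounded e).isCompact_closure
    |>.exists_bound_of_continuousOn hg.continuousOn
  refine ⟨K, fun y => ?_⟩
  have hfract : g (ZSpan.fract e y) = g y :=
    (periodic_of_mem_span_int hper (ZSpan.floor e y).2).sub_eq y
  rw [← hfract]
  exact hK _ (subset_closure (ZSpan.fract_mem_fundamentalDomain e y))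

open scoped Pointwise in
lemma setIntegral_fundamentalDomain_comp_add_right [NormedSpace ℝ F] [MeasurableSpace E]
    [BorelSpace E] (μ : Measure E) [μ.IsAddLeftInvariant] (hper : ∀ i, Periodic g (e i)) (v : E) :
    ∫ y in ZSpan.fundamentalDomain e, g (y + v) ∂μ = ∫ y in ZSpan.fundamentalDomain e, g y ∂μ := by
  cases nonempty_fintype ι
  set D := ZSpan.fundamentalDomain e
  have : VAddInvariantMeasure (Submodule.span ℤ (range e)) E μ :=
    inferInstanceAs <| VAddInvariantMeasure (Submodule.span ℤ (range e)).toAddSubgroup E μ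
  have hD : IsAddFundamentalDomain (Submodule.span ℤ (range e)) D μ :=
    ZSpan.isAddFundamentalDomain e μ
  have hinv (l : Submodule.span ℤ (range e)) (y : E) : g (l +ᵥ y) = g y := by
    rw [Submodule.vadd_def, vadd_eq_add, add_comm, periodic_of_mem_span_int hper l.2]
  calc
    ∫ y in D, g (y + v) ∂μ = ∫ y in D, g (v +ᵥ y) ∂μ := by simp only [vadd_eq_add, add_comm]
    _ = ∫ y in v +ᵥ D, g y ∂μ :=
      ((measurePreserving_vadd v μ).setIntegral_image_emb (measurableEmbedding_const_vadd v)
        g D).symm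
    _ = ∫ y in D, g y ∂μ := ((hD.setIntegral_eq (hD.vadd_of_comm v)) hinv).symm

end LatticePeriodic

lemma integrable_mul_of_hasCompactSupport {X : Type*} [TopologicalSpace X] [MeasurableSpace X]
    [OpensMeasurableSpace X] {μ : Measure X} [IsFiniteMeasureOnCompacts μ] {f g : X → ℝ}
    (hf : Continuous f) (hg : Continuous g) (hsupp : HasCompactSupport g) :
    Integrable (fun y => f y * g y) μ :=
  (hf.mul hg).integrable_of_hasCompactSupport hsupp.mul_left

lemma setIntegral_intervalIntegral_swap {X F : Type*} [MetricSpace X] [ProperSpace X]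
    [MeasurableSpace X] [BorelSpace X] {μ : Measure X} [IsFiniteMeasureOnCompacts μ]
    [NormedAddCommGroup F] [NormedSpace ℝ F] {f : ℝ → X → F} (hf : Continuous (uncurry f))
    {K : Set X} (hK : Bornology.IsBounded K) (a b : ℝ) :
    ∫ y in K, (∫ s in a..b, f s y) ∂μ = ∫ s in a..b, ∫ y in K, f s y ∂μ := by
  refine (intervalIntegral_integral_swap ?_).symm
  rw [Measure.prod_restrict]
  have hint : IntegrableOn (uncurry f) (uIcc a b ×ˢ closure K) (volume.prod μ) :=
    hf.continuousOn.integrableOn_compact (isCompact_uIcc.prod hK.isCompact_closure)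
  exact hint.mono_set (prod_mono uIoc_subset_uIcc subset_closure)

section OneVariable

variable {F : Type*} [NormedAddCommGroup F] [NormedSpace ℝ F] {h : ℝ → F}

lemma integral_comp_add_left_of_periodic (hper : Periodic h 1) (t : ℝ) :
    ∫ s in (0 : ℝ)..1, h (t + s) = ∫ s in (0 : ℝ)..1, h s := by
  simpa using hper.intervalIntegral_add_eq t 0

lemma hasDerivAt_integral_moving_interval [CompleteSpace F] (hh : Continuous h) (c t : ℝ) :
    HasDerivAt (fun t => ∫ r in t..t + c, h r) (h (t + c) - h t) t := by
  have hupper : HasDerivAt (fun t => ∫ r in (0 : ℝ)..t + c, h r) (h (t + c)) t :=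
    (hh.integral_hasStrictDerivAt 0 (t + c)).hasDerivAt.comp_add_const t c
  have hlower : HasDerivAt (fun t => ∫ r in (0 : ℝ)..t, h r) (h t) t :=
    (hh.integral_hasStrictDerivAt 0 t).hasDerivAt
  refine (hupper.sub hlower).congr_of_eventuallyEq (.of_forall fun t => ?_)
  exact (intervalIntegral.integral_interval_sub_left (hh.intervalIntegrable _ _)
    (hh.intervalIntegrable _ _)).symm

lemma integral_smul_comp_add_left_of_periodic (hh : Continuous h) (hper : Periodic h 1) (t : ℝ) :
    ∫ s in (0 : ℝ)..1, s • h (t + s) =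
      (∫ r in t..t + 1, r • h r) - t • ∫ s in (0 : ℝ)..1, h s := by
  have hint (k : ℝ → F) (hk : Continuous k) : IntervalIntegrable k volume 0 1 :=
    hk.intervalIntegrable 0 1
  calc
    ∫ s in (0 : ℝ)..1, s • h (t + s) =
        ∫ s in (0 : ℝ)..1, ((t + s) • h (t + s) - t • h (t + s)) := by
      simp only [← sub_smul, add_sub_cancel_left]
    _ = (∫ s in (0 : ℝ)..1, (t + s) • h (t + s)) - t • ∫ s in (0 : ℝ)..1, h (t + s) := by
      rw [intervalIntegral.integral_sub (hint _ (by fun_prop)) (hint _ (by fun_prop)),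
        intervalIntegral.integral_smul]
    _ = (∫ r in t..t + 1, r • h r) - t • ∫ s in (0 : ℝ)..1, h s := by
      rw [intervalIntegral.integral_comp_add_left (fun r => r • h r) t, add_zero,
        integral_comp_add_left_of_periodic hper]

lemma hasDerivAt_integral_smul_comp_add_left_of_periodic [CompleteSpace F] (hh : Continuous h)
    (hper : Periodic h 1) (t : ℝ) :
    HasDerivAt (fun t => ∫ s in (0 : ℝ)..1, s • h (t + s)) (h t - ∫ s in (0 : ℝ)..1, h s) t := by
  simp only [integral_smul_comp_add_left_of_periodic hh hper]
  have hmoving : HasDerivAt (fun t => ∫ r in t..t + 1, r • h r) (h t) t := by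
    convert hasDerivAt_integral_moving_interval (by fun_prop : Continuous fun r : ℝ => r • h r) 1 t
      using 1
    rw [hper t, add_smul, one_smul, add_sub_cancel_left]
  simpa using hmoving.fun_sub ((hasDerivAt_id t).smul_const (∫ s in (0 : ℝ)..1, h s))

end OneVariable

section SegmentIntegral

variable {E F : Type*} [NormedAddCommGroup E] [NormedSpace ℝ E] [NormedAddCommGroup F]
  [NormedSpace ℝ F]

/-- The integral of `g` over the segment from `y` to `y + v`, parametrized by `[0, 1]` and weighted
by `w`. The operators `Tₘ` and `Jₘ` of the introduction are the cases `w = 1` and `w = id` with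
`v = e m`. -/
def segmentIntegral (w : ℝ → ℝ) (v : E) (g : E → F) (y : E) : F :=
  ∫ s in (0 : ℝ)..1, w s • g (y + s • v)

variable {w : ℝ → ℝ} {v : E} {g : E → F}

lemma continuous_segmentIntegral (hw : Continuous w) (hg : Continuous g) :
    Continuous (segmentIntegral w v g) := by
  unfold segmentIntegral
  refine intervalIntegral.continuous_parametric_intervalIntegral_of_continuous' ?_ 0 1
  unfold uncurry
  fun_prop

lemma periodic_segmentIntegral {p : E} (hper : Periodic g p) :
    Periodic (segmentIntegral w v g) p := by
  intro y
  simp only [segmentIntegral, add_right_comm y p, hper _]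

lemma periodic_segmentIntegral_one_smul (hper : Periodic g v) (t : ℝ) :
    Periodic (segmentIntegral 1 v g) (t • v) := by
  intro y
  simpa [segmentIntegral, add_smul, ← add_assoc] using
    integral_comp_add_left_of_periodic (periodic_comp_add_smul hper y) t

lemma hasLineDerivAt_segmentIntegral_id [CompleteSpace F] (hg : Continuous g)
    (hper : Periodic g v) (y : E) :
    HasLineDerivAt ℝ (segmentIntegral id v g) (g y - segmentIntegral 1 v g y) y v := by
  have hcont : Continuous fun s : ℝ => g (y + s • v) := by fun_prop
  simpa [HasLineDerivAt, segmentIntegral, add_smul, ← add_assoc] using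
    hasDerivAt_integral_smul_comp_add_left_of_periodic hcont (periodic_comp_add_smul hper y) 0

lemma setIntegral_fundamentalDomain_segmentIntegral_one [CompleteSpace F] {ι : Type*} [Finite ι]
    (e : Basis ι ℝ E) [MeasurableSpace E] [BorelSpace E] (μ : Measure E)
    [IsFiniteMeasureOnCompacts μ] [μ.IsAddLeftInvariant] (hg : Continuous g)
    (hper : ∀ i, Periodic g (e i)) (v : E) :
    ∫ y in ZSpan.fundamentalDomain e, segmentIntegral 1 v g y ∂μ =
      ∫ y in ZSpan.fundamentalDomain e, g y ∂μ := by
  cases nonempty_fintype ι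
  have := e.finiteDimensional_of_finite
  have := FiniteDimensional.proper_real E
  have hcont : Continuous (uncurry fun (s : ℝ) y => g (y + s • v)) := by
    unfold uncurry
    fun_prop
  simp only [segmentIntegral, Pi.one_apply, one_smul]
  rw [setIntegral_intervalIntegral_swap hcont (ZSpan.fundamentalDomain_isBounded e)]
  simp [setIntegral_fundamentalDomain_comp_add_right e μ hper]

end SegmentIntegral

section WeakDivergence

variable {ι E : Type*} [Fintype ι] [NormedAddCommGroup E] [NormedSpace ℝ E] {e : ι → E}
  {f f₁ f₂ : ι → E → ℝ} {g g₁ g₂ ψ : E → ℝ}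

/-- The integrand `g ψ + ∑ₖ fₖ ∂ₖψ` in the weak form of `g = ∑ₖ ∂ₖ fₖ`, where `∂ₖ` is the derivative
along `e k`. -/
def weakDivIntegrand (e : ι → E) (f : ι → E → ℝ) (g ψ : E → ℝ) (y : E) : ℝ :=
  g y * ψ y + ∑ k, f k y * fderiv ℝ ψ y (e k)

lemma weakDivIntegrand_eq_zero_of_notMem_tsupport {y : E} (hy : y ∉ tsupport ψ) :
    weakDivIntegrand e f g ψ y = 0 := by
  have hfderiv : fderiv ℝ ψ y = 0 :=
    image_eq_zero_of_notMem_tsupport fun h => hy (tsupport_fderiv_subset ℝ h)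
  simp [weakDivIntegrand, image_eq_zero_of_notMem_tsupport hy, hfderiv]

lemma weakDivIntegrand_comp_sub_right (a y : E) :
    weakDivIntegrand e f g (fun x => ψ (x - a)) (y + a) =
      weakDivIntegrand e (fun k x => f k (x + a)) (fun x => g (x + a)) ψ y := by
  simp [weakDivIntegrand, fderiv_comp_sub]

lemma weakDivIntegrand_segmentIntegral {w : ℝ → ℝ} (hw : Continuous w) (v : E)
    (hf : ∀ k, Continuous (f k)) (hg : Continuous g) (y : E) :
    weakDivIntegrand e (fun k => segmentIntegral w v (f k)) (segmentIntegral w v g) ψ y =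
      ∫ s in (0 : ℝ)..1,
        w s * weakDivIntegrand e (fun k x => f k (x + s • v)) (fun x => g (x + s • v)) ψ y := by
  have hint (h : ℝ → ℝ) (hh : Continuous h) : IntervalIntegrable h volume 0 1 :=
    hh.intervalIntegrable 0 1
  simp only [weakDivIntegrand, segmentIntegral, smul_eq_mul, mul_add, Finset.mul_sum, ← mul_assoc,
    ← intervalIntegral.integral_mul_const]
  rw [intervalIntegral.integral_add (hint _ (by fun_prop)) (hint _ (by fun_prop)),
    intervalIntegral.integral_finsetSum fun k _ => hint _ (by fun_prop)]

variable [MeasurableSpace E] {μ : Measure E}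

/-- `g` is the distributional divergence `∑ₖ ∂ₖ fₖ` of `f`, where `∂ₖ` is the derivative along
`e k`. -/
def HasWeakDiv (μ : Measure E) (e : ι → E) (f : ι → E → ℝ) (g : E → ℝ) : Prop :=
  ∀ ψ : E → ℝ, ContDiff ℝ ∞ ψ → HasCompactSupport ψ → ∫ y, weakDivIntegrand e f g ψ y ∂μ = 0

lemma hasWeakDiv_zero : HasWeakDiv μ e 0 0 := by
  simp [HasWeakDiv, weakDivIntegrand]

lemma HasWeakDiv.neg (h : HasWeakDiv μ e f g) : HasWeakDiv μ e (-f) (-g) := by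
  intro ψ hψ hsupp
  have hneg (y : E) : weakDivIntegrand e (-f) (-g) ψ y = -weakDivIntegrand e f g ψ y := by
    simp [weakDivIntegrand, add_comm]
  simp only [hneg, integral_neg, h ψ hψ hsupp, neg_zero]

lemma HasWeakDiv.comp_add_right [BorelSpace E] [μ.IsAddRightInvariant]
    (h : HasWeakDiv μ e f g) (a : E) :
    HasWeakDiv μ e (fun k x => f k (x + a)) (fun x => g (x + a)) := by
  intro ψ hψ hsupp
  have hshift := h (fun x => ψ (x - a)) (hψ.comp (contDiff_id.sub contDiff_const))
    (hsupp.comp_homeomorph (Homeomorph.subRight a))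
  rw [← integral_add_right_eq_self _ a] at hshift
  simpa only [weakDivIntegrand_comp_sub_right] using hshift

section FiniteMeasureOnCompacts

variable [BorelSpace E] [IsFiniteMeasureOnCompacts μ]

lemma integrable_mul_fderiv_apply {f : E → ℝ} (hf : Continuous f) (hψ : ContDiff ℝ ∞ ψ)
    (hsupp : HasCompactSupport ψ) (v : E) : Integrable (fun y => f y * fderiv ℝ ψ y v) μ :=
  integrable_mul_of_hasCompactSupport hf
    ((hψ.continuous_fderiv (by simp)).clm_apply continuous_const) (hsupp.fderiv_apply (𝕜 := ℝ) v)

lemma integrable_weakDivIntegrand (hf : ∀ k, Continuous (f k)) (hg : Continuous g)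
    (hψ : ContDiff ℝ ∞ ψ) (hsupp : HasCompactSupport ψ) :
    Integrable (weakDivIntegrand e f g ψ) μ :=
  (integrable_mul_of_hasCompactSupport hg hψ.continuous hsupp).add
    (integrable_finsetSum _ fun k _ => integrable_mul_fderiv_apply (hf k) hψ hsupp (e k))

namespace HasWeakDiv

lemma integral_mul_eq (h : HasWeakDiv μ e f g) (hf : ∀ k, Continuous (f k)) (hg : Continuous g)
    (hψ : ContDiff ℝ ∞ ψ) (hsupp : HasCompactSupport ψ) :
    ∫ y, g y * ψ y ∂μ = -∑ k, ∫ y, f k y * fderiv ℝ ψ y (e k) ∂μ := by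
  have hint (k : ι) := integrable_mul_fderiv_apply (μ := μ) (hf k) hψ hsupp (e k)
  rw [eq_neg_iff_add_eq_zero, ← integral_finsetSum _ fun k _ => hint k,
    ← integral_add (integrable_mul_of_hasCompactSupport hg hψ.continuous hsupp)
      (integrable_finsetSum _ fun k _ => hint k)]
  exact h ψ hψ hsupp

protected lemma add (h₁ : HasWeakDiv μ e f₁ g₁) (h₂ : HasWeakDiv μ e f₂ g₂)
    (hf₁ : ∀ k, Continuous (f₁ k)) (hg₁ : Continuous g₁) (hf₂ : ∀ k, Continuous (f₂ k))
    (hg₂ : Continuous g₂) : HasWeakDiv μ e (f₁ + f₂) (g₁ + g₂) := by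
  intro ψ hψ hsupp
  have hadd (y : E) : weakDivIntegrand e (f₁ + f₂) (g₁ + g₂) ψ y =
      weakDivIntegrand e f₁ g₁ ψ y + weakDivIntegrand e f₂ g₂ ψ y := by
    simp only [weakDivIntegrand, Pi.add_apply, add_mul, Finset.sum_add_distrib]
    ring
  simp only [hadd]
  rw [integral_add (integrable_weakDivIntegrand hf₁ hg₁ hψ hsupp)
    (integrable_weakDivIntegrand hf₂ hg₂ hψ hsupp), h₁ ψ hψ hsupp, h₂ ψ hψ hsupp, add_zero]

protected lemma sub (h₁ : HasWeakDiv μ e f₁ g₁) (h₂ : HasWeakDiv μ e f₂ g₂)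
    (hf₁ : ∀ k, Continuous (f₁ k)) (hg₁ : Continuous g₁) (hf₂ : ∀ k, Continuous (f₂ k))
    (hg₂ : Continuous g₂) : HasWeakDiv μ e (f₁ - f₂) (g₁ - g₂) := by
  simpa only [sub_eq_add_neg] using h₁.add h₂.neg hf₁ hg₁ (fun k => (hf₂ k).neg) hg₂.neg

protected lemma segmentIntegral [FiniteDimensional ℝ E] [μ.IsAddRightInvariant]
    (h : HasWeakDiv μ e f g) (hf : ∀ k, Continuous (f k)) (hg : Continuous g) {w : ℝ → ℝ}
    (hw : Continuous w) (v : E) :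
    HasWeakDiv μ e (fun k => segmentIntegral w v (f k)) (segmentIntegral w v g) := by
  intro ψ hψ hsupp
  have hψ' : Continuous (fderiv ℝ ψ) := hψ.continuous_fderiv (by simp)
  have hcont : Continuous (uncurry fun (s : ℝ) y => w s *
      weakDivIntegrand e (fun k x => f k (x + s • v)) (fun x => g (x + s • v)) ψ y) := by
    unfold uncurry weakDivIntegrand
    have := hψ.continuous
    fun_prop
  have htranslate (s : ℝ) : ∫ y in tsupport ψ, w s *
      weakDivIntegrand e (fun k x => f k (x + s • v)) (fun x => g (x + s • v)) ψ y ∂μ = 0 := by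
    rw [integral_const_mul, setIntegral_eq_integral_of_forall_compl_eq_zero fun y hy =>
      weakDivIntegrand_eq_zero_of_notMem_tsupport hy, h.comp_add_right (s • v) ψ hψ hsupp, mul_zero]
  rw [← setIntegral_eq_integral_of_forall_compl_eq_zero (s := tsupport ψ) fun y hy =>
    weakDivIntegrand_eq_zero_of_notMem_tsupport hy]
  simp only [weakDivIntegrand_segmentIntegral hw v hf hg]
  rw [setIntegral_intervalIntegral_swap hcont hsupp.isBounded]
  simp only [htranslate, intervalIntegral.integral_zero]

end HasWeakDiv

end FiniteMeasureOnCompacts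

lemma hasWeakDiv_of_hasLineDerivAt [BorelSpace E] [FiniteDimensional ℝ E] [μ.IsAddHaarMeasure]
    {f' : ι → E → ℝ} (hf : ∀ k, Continuous (f k)) (hf' : ∀ k, Continuous (f' k))
    (h : ∀ k y, HasLineDerivAt ℝ (f k) (f' k y) y (e k)) : HasWeakDiv μ e f (∑ k, f' k) := by
  intro ψ hψ hsupp
  have hint₀ (k : ι) : Integrable (fun y => f k y * ψ y) μ :=
    integrable_mul_of_hasCompactSupport (hf k) hψ.continuous hsupp
  have hint₁ (k : ι) : Integrable (fun y => f' k y * ψ y) μ :=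
    integrable_mul_of_hasCompactSupport (hf' k) hψ.continuous hsupp
  have hint₂ (k : ι) := integrable_mul_fderiv_apply (μ := μ) (hf k) hψ hsupp (e k)
  have hparts (k : ι) :
      ∫ y, f k y * fderiv ℝ ψ y (e k) ∂μ = -∫ y, f' k y * ψ y ∂μ :=
    integral_bilinear_hasLineDerivAt_right_eq_neg_left_of_integrable
      (B := ContinuousLinearMap.mul ℝ ℝ) (hint₁ k) (hint₂ k) (hint₀ k) (fun y _ => h k y)
      fun y _ => (hψ.differentiable (by simp) y).hasFDerivAt.hasLineDerivAt (e k)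
  simp only [weakDivIntegrand, Finset.sum_apply, Finset.sum_mul, ← Finset.sum_add_distrib]
  rw [integral_finsetSum _ fun k _ => (hint₁ k).fun_add (hint₂ k)]
  refine Finset.sum_eq_zero fun k _ => ?_
  rw [integral_add (hint₁ k) (hint₂ k), hparts, add_neg_cancel]

lemma hasWeakDiv_const [BorelSpace E] [FiniteDimensional ℝ E] [μ.IsAddHaarMeasure] (c : ι → ℝ) :
    HasWeakDiv μ e (fun k _ => c k) 0 := by
  simpa using hasWeakDiv_of_hasLineDerivAt (μ := μ) (e := e) (f := fun k _ => c k)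
    (f' := 0) (fun _ => continuous_const) (fun _ => continuous_zero)
    fun _ _ => by simp [HasLineDerivAt, hasDerivAt_const]

lemma hasWeakDiv_ite [BorelSpace E] [FiniteDimensional ℝ E] [μ.IsAddHaarMeasure] [DecidableEq ι]
    {m : ι} {g' : E → ℝ} (hg : Continuous g) (hg' : Continuous g')
    (h : ∀ y, HasLineDerivAt ℝ g (g' y) y (e m)) :
    HasWeakDiv μ e (fun k => if k = m then g else 0) g' := by
  have hdiv : HasWeakDiv μ e (fun k => if k = m then g else 0)
      (∑ k, if k = m then g' else 0) := by
    refine hasWeakDiv_of_hasLineDerivAt (fun k => ?_) (fun k => ?_) fun k y => ?_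
    · split_ifs
      exacts [hg, continuous_zero]
    · split_ifs
      exacts [hg', continuous_zero]
    · split_ifs with hk
      · exact hk ▸ h y
      · simp [HasLineDerivAt, hasDerivAt_const]
  rwa [Finset.sum_ite_eq' Finset.univ m fun _ => g', if_pos (Finset.mem_univ m)] at hdiv

end WeakDivergence

section FluxPotential

variable {ι E : Type*} [Fintype ι] [NormedAddCommGroup E] [NormedSpace ℝ E] [MeasurableSpace E]

/-- `b` is a continuous divergence-free vector field, periodic with respect to the lattice spanned
by `e`; the divergence is taken in the sense of distributions. -/
structure IsPeriodicSolenoidal (μ : Measure E) (e : ι → E) (b : ι → E → ℝ) : Prop where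
  continuous : ∀ i, Continuous (b i)
  periodic : ∀ i k, Periodic (b i) (e k)
  hasWeakDiv : HasWeakDiv μ e b 0

/-- `φ` is a continuous periodic antisymmetric matrix potential of the vector field `b`, that is,
`b i = ∑ₖ ∂ₖ (φ k i)` in the sense of distributions. -/
structure IsFluxPotential (μ : Measure E) (e : ι → E) (φ : ι → ι → E → ℝ) (b : ι → E → ℝ) :
    Prop where
  continuous : ∀ k i, Continuous (φ k i)
  periodic : ∀ k i m, Periodic (φ k i) (e m)
  antisymm : ∀ k i, φ k i = -φ i k
  hasWeakDiv : ∀ i, HasWeakDiv μ e (fun k => φ k i) (b i)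

variable {μ : Measure E} {e : ι → E} {b c : ι → E → ℝ} {φ φ' : ι → ι → E → ℝ}

lemma isFluxPotential_zero : IsFluxPotential μ e 0 0 where
  continuous _ _ := continuous_zero
  periodic _ _ _ _ := rfl
  antisymm _ _ := neg_zero.symm
  hasWeakDiv _ := hasWeakDiv_zero

variable [BorelSpace E]

lemma IsFluxPotential.add [IsFiniteMeasureOnCompacts μ] (hφ : IsFluxPotential μ e φ b)
    (hφ' : IsFluxPotential μ e φ' c) (hb : ∀ i, Continuous (b i)) (hc : ∀ i, Continuous (c i)) :
    IsFluxPotential μ e (φ + φ') (b + c) where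
  continuous k i := (hφ.continuous k i).add (hφ'.continuous k i)
  periodic k i m := (hφ.periodic k i m).add (hφ'.periodic k i m)
  antisymm k i := by
    simp only [Pi.add_apply, hφ.antisymm k i, hφ'.antisymm k i, neg_add]
  hasWeakDiv i := (hφ.hasWeakDiv i).add (hφ'.hasWeakDiv i) (fun k => hφ.continuous k i) (hb i)
    (fun k => hφ'.continuous k i) (hc i)

variable [FiniteDimensional ℝ E] [μ.IsAddHaarMeasure]

protected lemma IsPeriodicSolenoidal.segmentIntegral (hc : IsPeriodicSolenoidal μ e c) {w : ℝ → ℝ}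
    (hw : Continuous w) (v : E) :
    IsPeriodicSolenoidal μ e fun i => segmentIntegral w v (c i) where
  continuous i := continuous_segmentIntegral hw (hc.continuous i)
  periodic i k := periodic_segmentIntegral (hc.periodic i k)
  hasWeakDiv := by
    have hzero : segmentIntegral w v (0 : E → ℝ) = 0 := by
      ext y
      simp [segmentIntegral]
    simpa only [hzero] using hc.hasWeakDiv.segmentIntegral hc.continuous continuous_zero hw v

/-- The matrix field `δₖₘ Jₘ cᵢ - δᵢₘ Jₘ cₖ`, where `Jₘ` is the segment integral along `e m` with
weight `id`; it is a potential of the deviation of `c` from its average along `e m`. -/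
def segmentPotential [DecidableEq ι] (e : ι → E) (m : ι) (c : ι → E → ℝ) (k i : ι) : E → ℝ :=
  (if k = m then segmentIntegral id (e m) (c i) else 0) -
    if i = m then segmentIntegral id (e m) (c k) else 0

lemma isFluxPotential_segmentPotential [DecidableEq ι] (hc : IsPeriodicSolenoidal μ e c) (m : ι) :
    IsFluxPotential μ e (segmentPotential e m c) (c - fun i => segmentIntegral 1 (e m) (c i)) := by
  have hJ : IsPeriodicSolenoidal μ e fun i => segmentIntegral id (e m) (c i) :=
    hc.segmentIntegral continuous_id (e m)
  have hT : IsPeriodicSolenoidal μ e fun i => segmentIntegral 1 (e m) (c i) :=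
    hc.segmentIntegral continuous_one (e m)
  have hcont (p : Prop) [Decidable p] (i : ι) :
      Continuous (if p then segmentIntegral id (e m) (c i) else 0) := by
    split_ifs
    exacts [hJ.continuous i, continuous_zero]
  have hper (p : Prop) [Decidable p] (i l : ι) :
      Periodic (if p then segmentIntegral id (e m) (c i) else 0) (e l) := by
    split_ifs
    exacts [hJ.periodic i l, fun _ => rfl]
  have hdiv_first (i : ι) : HasWeakDiv μ e
      (fun k => if k = m then segmentIntegral id (e m) (c i) else 0)
      (c i - segmentIntegral 1 (e m) (c i)) :=
    hasWeakDiv_ite (hJ.continuous i) ((hc.continuous i).sub (hT.continuous i))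
      (hasLineDerivAt_segmentIntegral_id (hc.continuous i) (hc.periodic i m))
  have hdiv_second (i : ι) : HasWeakDiv μ e
      (fun k => if i = m then segmentIntegral id (e m) (c k) else 0) 0 := by
    split_ifs
    exacts [hJ.hasWeakDiv, hasWeakDiv_zero]
  exact
    { continuous := fun k i => (hcont _ i).sub (hcont _ k)
      periodic := fun k i l => (hper _ i l).sub (hper _ k l)
      antisymm := fun k i => (neg_sub _ _).symm
      hasWeakDiv := fun i => by
        have hsub := (hdiv_first i).sub (hdiv_second i) (fun k => hcont _ i)
          ((hc.continuous i).sub (hT.continuous i)) (fun k => hcont _ k) continuous_zero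
        rwa [sub_zero] at hsub }

end FluxPotential

section Averaging

variable {ι E : Type*} [Fintype ι] [NormedAddCommGroup E] [NormedSpace ℝ E] [MeasurableSpace E]
  [BorelSpace E] {e : Basis ι ℝ E} {μ : Measure E} [μ.IsAddHaarMeasure] {b : ι → E → ℝ}

namespace IsPeriodicSolenoidal

lemma exists_isFluxPotential_sub (hb : IsPeriodicSolenoidal μ e b) (S : Finset ι) :
    ∃ φ c, IsFluxPotential μ e φ (b - c) ∧ IsPeriodicSolenoidal μ e c ∧
      (∀ i, ∫ y in ZSpan.fundamentalDomain e, c i y ∂μ =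
        ∫ y in ZSpan.fundamentalDomain e, b i y ∂μ) ∧
      ∀ m ∈ S, ∀ i (t : ℝ), Periodic (c i) (t • e m) := by
  classical
  have := e.finiteDimensional_of_finite
  induction S using Finset.induction_on with
  | empty => exact ⟨0, b, by simpa using isFluxPotential_zero, hb, fun _ => rfl, by simp⟩
  | insert m S _ ih =>
    obtain ⟨φ, c, hφ, hc, hmean, hinv⟩ := ih
    have hT : IsPeriodicSolenoidal μ e fun i => segmentIntegral 1 (e m) (c i) :=
      hc.segmentIntegral continuous_one (e m)
    refine ⟨φ + segmentPotential e m c, _, ?_, hT, fun i => ?_, fun l hl i t => ?_⟩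
    · rw [← sub_add_sub_cancel b c]
      exact hφ.add (isFluxPotential_segmentPotential hc m)
        (fun i => (hb.continuous i).sub (hc.continuous i))
        fun i => (hc.continuous i).sub (hT.continuous i)
    · rw [setIntegral_fundamentalDomain_segmentIntegral_one e μ (hc.continuous i) (hc.periodic i),
        hmean]
    · rcases Finset.mem_insert.mp hl with rfl | hl
      · exact periodic_segmentIntegral_one_smul (hc.periodic i l) t
      · exact periodic_segmentIntegral (hinv l hl i t)

theorem exists_isFluxPotential (hb : IsPeriodicSolenoidal μ e b)
    (hmean : ∀ i, ∫ y in ZSpan.fundamentalDomain e, b i y ∂μ = 0) :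
    ∃ φ, IsFluxPotential μ e φ b := by
  have := e.finiteDimensional_of_finite
  have := FiniteDimensional.proper_real E
  obtain ⟨φ, c, hφ, -, hmean_eq, hinv⟩ := hb.exists_isFluxPotential_sub Finset.univ
  have hconst (i : ι) (y : E) : c i y = c i 0 :=
    eq_apply_zero_of_periodic_smul_basis e (fun m => hinv m (Finset.mem_univ m) i) y
  have hvol : μ.real (ZSpan.fundamentalDomain e) ≠ 0 :=
    (measureReal_ne_zero_iff (ZSpan.fundamentalDomain_isBounded e).measure_lt_top.ne).mpr
      (ZSpan.measure_fundamentalDomain_ne_zero e)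
  have hzero : c = 0 := by
    ext i y
    have hi := (hmean_eq i).trans (hmean i)
    simp only [hconst, setIntegral_const, smul_eq_mul, mul_eq_zero, hvol, false_or] at hi
    rw [hconst, hi, Pi.zero_apply, Pi.zero_apply]
  exact ⟨φ, by simpa [hzero] using hφ⟩

end IsPeriodicSolenoidal

end Averaging

section Euclidean

variable {d : ℕ}

/-- The standard basis of `ℝᵈ`, as a basis in the sense of linear algebra. -/
def stdBasis (d : ℕ) : Basis (Fin d) ℝ (EuclideanSpace ℝ (Fin d)) :=
  (EuclideanSpace.basisFun (Fin d) ℝ).toBasis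

lemma stdBasis_apply (k : Fin d) : stdBasis d k = EuclideanSpace.single k 1 := by
  simp [stdBasis]

lemma stdBasis_repr_apply (y : EuclideanSpace ℝ (Fin d)) (k : Fin d) :
    (stdBasis d).repr y k = y k := by
  simp [stdBasis]

lemma forall_perPt_iff_periodic_stdBasis {F : Type*} {g : EuclideanSpace ℝ (Fin d) → F} :
    (∀ y (z : Fin d → ℤ), g (y + perPt z) = g y) ↔ ∀ k, Periodic g (stdBasis d k) := by
  refine ⟨fun h k y => ?_, fun h y z => ?_⟩
  · have hk : perPt (Pi.single k 1) = stdBasis d k := by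
      ext i
      simp [perPt, stdBasis_apply, Pi.single_apply]
    rw [← hk, h]
  · have hz : perPt z ∈ Submodule.span ℤ (range (stdBasis d)) :=
      ((stdBasis d).mem_span_iff_repr_mem ℤ _).mpr fun i =>
        ⟨z i, by simp [perPt, stdBasis_repr_apply]⟩
    exact periodic_of_mem_span_int h hz y

lemma unitCube_eq_parallelepiped : unitCube d = parallelepiped (stdBasis d) := by
  simp only [parallelepiped_basis_eq, stdBasis_repr_apply, unitCube]

lemma isCompact_unitCube : IsCompact (unitCube d) :=
  unitCube_eq_parallelepiped ▸ (stdBasis d).parallelepiped.isCompact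

lemma volume_real_unitCube : volume.real (unitCube d) = 1 := by
  rw [unitCube_eq_parallelepiped, stdBasis, OrthonormalBasis.coe_toBasis, measureReal_def,
    OrthonormalBasis.volume_parallelepiped, ENNReal.toReal_one]

lemma setIntegral_fundamentalDomain_stdBasis (g : EuclideanSpace ℝ (Fin d) → ℝ) :
    ∫ y in ZSpan.fundamentalDomain (stdBasis d), g y = ∫ y in unitCube d, g y := by
  rw [unitCube_eq_parallelepiped]
  exact setIntegral_congr_set (ZSpan.fundamentalDomain_ae_parallelepiped (stdBasis d) volume)

lemma gradient_apply_eq_fderiv_stdBasis {ψ : EuclideanSpace ℝ (Fin d) → ℝ}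
    (y : EuclideanSpace ℝ (Fin d)) (k : Fin d) :
    gradient ψ y k = fderiv ℝ ψ y (stdBasis d k) := by
  rw [← inner_gradient_left, stdBasis_apply, EuclideanSpace.inner_single_right]
  simp

end Euclidean

section Corrector

variable {d : ℕ} {A : EuclideanSpace ℝ (Fin d) → Matrix (Fin d) (Fin d) ℝ}
  {χ : Fin d → EuclideanSpace ℝ (Fin d) → ℝ}

/-- The flux `A (∇χⱼ + eⱼ)` of the corrected coordinate function `yⱼ + χⱼ`; its mean over the unit
cube is the `j`-th column of the homogenized matrix. -/
def correctedFlux (A : EuclideanSpace ℝ (Fin d) → Matrix (Fin d) (Fin d) ℝ)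
    (χ : Fin d → EuclideanSpace ℝ (Fin d) → ℝ) (j i : Fin d) (y : EuclideanSpace ℝ (Fin d)) : ℝ :=
  A y i j + ∑ k, A y i k * gradient (χ j) y k

lemma bform_gradient_add_single (j : Fin d) (ψ : EuclideanSpace ℝ (Fin d) → ℝ)
    (y : EuclideanSpace ℝ (Fin d)) :
    bform (A y) (gradient (χ j) y + EuclideanSpace.single j 1) (gradient ψ y) =
      weakDivIntegrand (stdBasis d) (correctedFlux A χ j) 0 ψ y := by
  simp only [bform, weakDivIntegrand, correctedFlux, ← gradient_apply_eq_fderiv_stdBasis,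
    ← Finset.sum_mul, Pi.zero_apply, zero_mul, zero_add]
  refine Finset.sum_congr rfl fun i _ => ?_
  simp [mul_add, Finset.sum_add_distrib, add_comm]

namespace IsCorrector

lemma continuous_correctedFlux (hχ : IsCorrector A χ) (hA : Continuous A) (j i : Fin d) :
    Continuous (correctedFlux A χ j i) := by
  have hgrad : Continuous (fderiv ℝ (χ j)) := (hχ j).1.continuous_fderiv one_ne_zero
  unfold correctedFlux
  simp only [gradient_apply_eq_fderiv_stdBasis]
  fun_prop

lemma periodic_correctedFlux (hχ : IsCorrector A χ) (hA : ∀ k, Periodic A (stdBasis d k))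
    (j i k : Fin d) : Periodic (correctedFlux A χ j i) (stdBasis d k) := by
  intro y
  have hχper : (fun x => χ j (x + stdBasis d k)) = χ j :=
    funext (forall_perPt_iff_periodic_stdBasis.mp (hχ j).2.1 k)
  have hgrad : fderiv ℝ (χ j) (y + stdBasis d k) = fderiv ℝ (χ j) y := by
    rw [← fderiv_comp_add_right, hχper]
  simp only [correctedFlux, gradient_apply_eq_fderiv_stdBasis, hgrad, hA k y]

lemma hasWeakDiv_correctedFlux (hχ : IsCorrector A χ) (j : Fin d) :
    HasWeakDiv volume (stdBasis d) (correctedFlux A χ j) 0 := by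
  intro ψ hψ hsupp
  simpa only [bform_gradient_add_single] using (hχ j).2.2.2 ψ hψ hsupp

lemma isPeriodicSolenoidal_correctedFlux_sub (hχ : IsCorrector A χ) (hA : Continuous A)
    (hAper : ∀ k, Periodic A (stdBasis d k)) (j : Fin d) (c : Fin d → ℝ) :
    IsPeriodicSolenoidal volume (stdBasis d) fun i y => correctedFlux A χ j i y - c i where
  continuous i := (hχ.continuous_correctedFlux hA j i).sub continuous_const
  periodic i k := (hχ.periodic_correctedFlux hAper j i k).comp (· - c i)
  hasWeakDiv := by
    have hsub := (hχ.hasWeakDiv_correctedFlux j).sub (hasWeakDiv_const c)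
      (hχ.continuous_correctedFlux hA j) continuous_zero (fun _ => continuous_const) continuous_zero
    rwa [sub_zero] at hsub

lemma setIntegral_correctedFlux_sub_homMatrix (hχ : IsCorrector A χ) (hA : Continuous A)
    (i j : Fin d) : ∫ y in unitCube d, (correctedFlux A χ j i y - homMatrix A χ i j) = 0 := by
  have hhom : homMatrix A χ i j = ∫ y in unitCube d, correctedFlux A χ j i y := rfl
  rw [integral_sub ((hχ.continuous_correctedFlux hA j i).continuousOn.integrableOn_compact
      isCompact_unitCube) (integrableOn_const isCompact_unitCube.measure_lt_top.ne),
    setIntegral_const, volume_real_unitCube, one_smul, hhom, sub_self]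

end IsCorrector

lemma MemA.continuous {lam M : ℝ} (hA : MemA d lam M A) : Continuous A := by
  refine continuous_matrix fun i j => (LipschitzWith.of_dist_le' (K := M) fun x y => ?_).continuous
  simpa only [Real.dist_eq, dist_eq_norm x y] using hA.lipschitz x y i j

end Corrector

theorem flux_corrector_exists_general {d : ℕ}
    {A : EuclideanSpace ℝ (Fin d) → Matrix (Fin d) (Fin d) ℝ} (hA : Continuous A)
    (hAper : ∀ (y : EuclideanSpace ℝ (Fin d)) (z : Fin d → ℤ), A (y + perPt z) = A y)
    {χ : Fin d → EuclideanSpace ℝ (Fin d) → ℝ} (hχ : IsCorrector A χ)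
    {Ahat : Matrix (Fin d) (Fin d) ℝ} (hAhat : Ahat = homMatrix A χ)
    {b : Fin d → Fin d → EuclideanSpace ℝ (Fin d) → ℝ}
    (hb : ∀ i j y, b i j y = A y i j + (∑ k, A y i k * gradient (χ j) y k) - Ahat i j) :
    ∃ φ : Fin d → Fin d → Fin d → EuclideanSpace ℝ (Fin d) → ℝ,
      (∀ k i j, Continuous (φ k i j)) ∧
      (∀ k i j, ∃ K : ℝ, ∀ y, |φ k i j y| ≤ K) ∧
      (∀ k i j (y : EuclideanSpace ℝ (Fin d)) (z : Fin d → ℤ), φ k i j (y + perPt z) = φ k i j y) ∧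
      (∀ k i j y, φ k i j y = -φ i k j y) ∧
      (∀ i j, ∀ ψ : EuclideanSpace ℝ (Fin d) → ℝ, ContDiff ℝ (⊤ : ℕ∞) ψ → HasCompactSupport ψ →
        (∫ y, b i j y * ψ y) = -∑ k, ∫ y, φ k i j y * gradient ψ y k) := by
  have hb_eq (i j : Fin d) : b i j = fun y => correctedFlux A χ j i y - homMatrix A χ i j := by
    ext y
    rw [hb, hAhat, correctedFlux]
  have hsol (j : Fin d) : IsPeriodicSolenoidal volume (stdBasis d) fun i => b i j := by
    simpa only [hb_eq] using hχ.isPeriodicSolenoidal_correctedFlux_sub hA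
      (forall_perPt_iff_periodic_stdBasis.mp hAper) j fun i => homMatrix A χ i j
  have hmean (i j : Fin d) : ∫ y in ZSpan.fundamentalDomain (stdBasis d), b i j y = 0 := by
    rw [setIntegral_fundamentalDomain_stdBasis, hb_eq,
      hχ.setIntegral_correctedFlux_sub_homMatrix hA]
  choose φ hφ using fun j => (hsol j).exists_isFluxPotential fun i => hmean i j
  refine ⟨fun k i j => φ j k i, fun k i j => (hφ j).continuous k i, fun k i j => ?_,
    fun k i j => ?_, fun k i j => congrFun ((hφ j).antisymm k i), fun i j ψ hψ hsupp => ?_⟩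
  · exact exists_norm_le_of_continuous_of_periodic (stdBasis d) ((hφ j).continuous k i)
      ((hφ j).periodic k i)
  · exact forall_perPt_iff_periodic_stdBasis.mpr ((hφ j).periodic k i)
  · simp only [gradient_apply_eq_fderiv_stdBasis]
    exact ((hφ j).hasWeakDiv i).integral_mul_eq (fun k => (hφ j).continuous k i)
      ((hsol j).continuous i) hψ hsupp

/-- **Lemma 2.1.** Existence of the flux corrector `φ = (φ_kij)`: bounded continuous
periodic functions, antisymmetric in `(k,i)`, with `b_ij = ∂_k φ_kij` distributionally. -/
theorem flux_corrector_exists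
    (d : ℕ) (hd : 2 ≤ d) (lam M : ℝ) (hlam0 : 0 < lam) (hlam1 : lam ≤ 1) (hM : 0 < M)
    (A : EuclideanSpace ℝ (Fin d) → Matrix (Fin d) (Fin d) ℝ) (hA : MemA d lam M A)
    (χ : Fin d → EuclideanSpace ℝ (Fin d) → ℝ) (hχ : IsCorrector A χ)
    (Ahat : Matrix (Fin d) (Fin d) ℝ) (hAhat : Ahat = homMatrix A χ)
    (b : Fin d → Fin d → EuclideanSpace ℝ (Fin d) → ℝ)
    (hb : ∀ i j y, b i j y = A y i j + (∑ k, A y i k * gradient (χ j) y k) - Ahat i j) :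
    ∃ φ : Fin d → Fin d → Fin d → EuclideanSpace ℝ (Fin d) → ℝ,
      (∀ k i j, Continuous (φ k i j)) ∧
      (∀ k i j, ∃ K : ℝ, ∀ y, |φ k i j y| ≤ K) ∧
      (∀ k i j (y : EuclideanSpace ℝ (Fin d)) (z : Fin d → ℤ), φ k i j (y + perPt z) = φ k i j y) ∧
      (∀ k i j y, φ k i j y = -φ i k j y) ∧
      (∀ i j, ∀ ψ : EuclideanSpace ℝ (Fin d) → ℝ, ContDiff ℝ (⊤ : ℕ∞) ψ → HasCompactSupport ψ →
        (∫ y, b i j y * ψ y) = -∑ k, ∫ y, φ k i j y * gradient ψ y k) :=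
  flux_corrector_exists_general hA.continuous hA.periodic hχ hAhat hb

end
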